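/- arXiv:2211.01967 — 6 statements merged into one kernel-verified Lean document; each statement's English description precedes it below -/
import Mathlib

section
/- Let α, β, δ, η be real numbers and let N_V ≤ N_C be positive integers. Let A be the real (N_V+N_C)×(N_V+N_C) block matrix with upper-left block ((α+β/4)/4)·I_{N_V,N_V}, upper-right block (η/8)·I_{N_V,N_C}, lower-left block (η/8)·I_{N_C,N_V}, and lower-right block (δ/4)·I_{N_C,N_C}. Then the characteristic polynomial of A equals (X − δ/4)^{N_C−N_V} · (X − λ₂)^{N_V} · (X − λ₃)^{N_V}; in particular, the eigenvalues of A are λ₁ = δ/4 with multiplicity N_C − N_V, and λ₂ and λ₃, each with multiplicity N_V. (Paper's Schur analysis of the principal part of the one-compartment preconditioned matrix in the case N_C ≥ N_V.) -/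
/-!
Let `J` be the `N_V × N_C` rectangular identity. Since `N_V ≤ N_C`, `J * Jᵀ = 1`. With
`p = X - (α + β/4)/4`, `q = X - δ/4` and `e = -η/8`, the characteristic matrix is the block matrix
`[p, eJ; eJᵀ, q]`, and multiplying it on the right by `[q, 0; -eJᵀ, 1]` makes it block upper
triangular with diagonal blocks `pq - e²` and `q`. Taking determinants and cancelling the nonzero
polynomial `q ^ N_V` gives `q ^ (N_C - N_V) * (pq - e²) ^ N_V` (`det_fromBlocks_scalar`). Finally
`λ₂` and `λ₃` are the two roots of the quadratic `pq - e²`.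
-/

open Polynomial

/-- A division-free Schur complement: clearing the lower-left block costs a factor `q ^ card m`,
which is cancelled afterwards. The hypothesis `J * K = 1` forces `card m ≤ card n`, but that
inequality is taken as an assumption. -/
theorem det_fromBlocks_scalar {R m n : Type*} [CommRing R] [IsDomain R]
    [Fintype m] [DecidableEq m] [Fintype n] [DecidableEq n]
    (p q e : R) (hq : q ≠ 0) (J : Matrix m n R) (K : Matrix n m R) (hJ : J * K = 1)
    (hmn : Fintype.card m ≤ Fintype.card n) :
    (Matrix.fromBlocks (p • (1 : Matrix m m R)) (e • J) (e • K) (q • (1 : Matrix n n R))).det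
      = q ^ (Fintype.card n - Fintype.card m) * (p * q - e ^ 2) ^ Fintype.card m := by
  have key : Matrix.fromBlocks (p • (1 : Matrix m m R)) (e • J) (e • K) (q • (1 : Matrix n n R))
      * Matrix.fromBlocks (q • (1 : Matrix m m R)) 0 (-(e • K)) (1 : Matrix n n R)
      = Matrix.fromBlocks ((p * q - e ^ 2) • (1 : Matrix m m R)) (e • J) 0
          (q • (1 : Matrix n n R)) := by
    rw [Matrix.fromBlocks_multiply]
    congr 1
    · simp [hJ, smul_smul, sub_eq_add_neg, pow_two, add_smul, neg_smul, mul_comm]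
    · simp
    · simp [smul_smul, mul_comm]
    · simp
  have hdet := congrArg Matrix.det key
  rw [Matrix.det_mul, Matrix.det_fromBlocks_zero₁₂, Matrix.det_fromBlocks_zero₂₁] at hdet
  simp only [Matrix.det_smul, Matrix.det_one, mul_one] at hdet
  apply mul_right_cancel₀ (pow_ne_zero (Fintype.card m) hq)
  rw [hdet, mul_right_comm, ← pow_add, Nat.sub_add_cancel hmn, mul_comm]

/-- Schur analysis of the principal part of the one-compartment preconditioned matrix in the
case `N_V ≤ N_C`: its characteristic polynomial is
`(X − δ/4)^(N_C−N_V) · (X − λ₂)^(N_V) · (X − λ₃)^(N_V)`. -/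
theorem stmt_6 (α β δ η : ℝ) (NV NC : ℕ) (hNV : 0 < NV) (hNC : 0 < NC) (h : NV ≤ NC) :
    (Matrix.fromBlocks
        (((α + β / 4) / 4) • (1 : Matrix (Fin NV) (Fin NV) ℝ))
        ((η / 8) • Matrix.of fun (i : Fin NV) (j : Fin NC) =>
          if (i : ℕ) = (j : ℕ) then (1 : ℝ) else 0)
        ((η / 8) • Matrix.of fun (i : Fin NC) (j : Fin NV) =>
          if (i : ℕ) = (j : ℕ) then (1 : ℝ) else 0)
        ((δ / 4) • (1 : Matrix (Fin NC) (Fin NC) ℝ))).charpoly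
      = (X - C (δ / 4)) ^ (NC - NV)
        * (X - C ((1 / 32) * (4 * α + β + 4 * δ
            - Real.sqrt ((4 * α + β - 4 * δ) ^ 2 + 16 * η ^ 2)))) ^ NV
        * (X - C ((1 / 32) * (4 * α + β + 4 * δ
            + Real.sqrt ((4 * α + β - 4 * δ) ^ 2 + 16 * η ^ 2)))) ^ NV := by
  have hJ : (Matrix.of fun (i : Fin NV) (j : Fin NC) => if (i : ℕ) = (j : ℕ) then (1 : ℝ[X]) else 0)
      * (Matrix.of fun (i : Fin NC) (j : Fin NV) => if (i : ℕ) = (j : ℕ) then (1 : ℝ[X]) else 0)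
      = 1 := by
    ext1 i j
    -- Only the column `i`, which exists because `NV ≤ NC`, contributes to the product.
    rw [Matrix.mul_apply, Finset.sum_eq_single (Fin.castLE h i)]
    · simp [Matrix.one_apply, Fin.ext_iff]
    · intro k _ hk
      have hne : (i : ℕ) ≠ (k : ℕ) := fun hik => hk (Fin.ext (by simp [hik]))
      simp [hne]
    · simp
  have hdet := det_fromBlocks_scalar (X - C ((α + β / 4) / 4)) (X - C (δ / 4)) (-C (η / 8))
    (X_sub_C_ne_zero _) _ _ hJ (by simpa using h)
  simp only [Fintype.card_fin] at hdet
  have hquad : (X - C ((α + β / 4) / 4)) * (X - C (δ / 4)) - (-C (η / 8)) ^ 2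
      = (X - C ((1 / 32) * (4 * α + β + 4 * δ
            - Real.sqrt ((4 * α + β - 4 * δ) ^ 2 + 16 * η ^ 2))))
        * (X - C ((1 / 32) * (4 * α + β + 4 * δ
            + Real.sqrt ((4 * α + β - 4 * δ) ^ 2 + 16 * η ^ 2)))) := by
    have hs := Real.sq_sqrt (show 0 ≤ (4 * α + β - 4 * δ) ^ 2 + 16 * η ^ 2 by positivity)
    set s := Real.sqrt ((4 * α + β - 4 * δ) ^ 2 + 16 * η ^ 2)
    -- Polynomials over the infinite field `ℝ` are compared through their values.
    refine Polynomial.funext fun x => ?_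
    simp only [eval_sub, eval_mul, eval_pow, eval_neg, eval_X, eval_C]
    linear_combination (1 / 1024) * hs
  rw [mul_assoc, ← mul_pow, ← hquad, ← hdet, Matrix.charpoly, Matrix.charmatrix_fromBlocks]
  congr 2
  · ext1 i j
    by_cases hij : i = j
    · subst hij; simp
    · simp [hij]
  · ext1 i j
    by_cases hij : (i : ℕ) = (j : ℕ) <;> simp [hij]
  · ext1 i j
    by_cases hij : (i : ℕ) = (j : ℕ) <;> simp [hij]
  · ext1 i j
    by_cases hij : i = j
    · subst hij; simp
    · simp [hij]
end

section
/- Let α, β, δ, η be real numbers and let N_C < N_V be positive integers. Let A be the real (N_V+N_C)×(N_V+N_C) block matrix with upper-left block ((α+β/4)/4)·I_{N_V,N_V}, upper-right block (η/8)·I_{N_V,N_C}, lower-left block (η/8)·I_{N_C,N_V}, and lower-right block (δ/4)·I_{N_C,N_C}. Then the characteristic polynomial of A equals (X − (4α+β)/16)^{N_V−N_C} · (X − λ₂)^{N_C} · (X − λ₃)^{N_C}; in particular, the eigenvalues of A are λ₁ = (4α+β)/16 with multiplicity N_V − N_C, and λ₂ and λ₃, each with multiplicity N_C. (Paper's Schur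 analysis of the principal part of the one-compartment preconditioned matrix in the case N_C < N_V.) -/
/-!
The characteristic matrix has the form `[[p • 1, U], [L, q • 1]]` with `p = X - (4α+β)/16` and
`q = X - δ/4`. Since `N_C < N_V`, the rectangular identities satisfy
`I_{N_C,N_V} * I_{N_V,N_C} = 1`, hence `L * U = (η/8)² • 1`. A Schur complement with denominators
cleared (`det_scalar_blocks_mul`) followed by cancellation of `p ^ N_C` in the domain `ℝ[X]` gives
`p ^ (N_V - N_C) * (p * q - (η/8)²) ^ N_C`, and the roots of the quadratic `p * q - (η/8)²` are
`λ₂` and `λ₃`.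
-/

open Polynomial

/-- Schur complement formula with denominators cleared, so that `p` need not be invertible. It is
obtained by taking determinants after right multiplication by `[[1, -U], [0, p • 1]]`. -/
lemma det_scalar_blocks_mul {R m n : Type*} [CommRing R] [Fintype m] [Fintype n] [DecidableEq m]
    [DecidableEq n] (p q : R) (U : Matrix m n R) (L : Matrix n m R) :
    (Matrix.fromBlocks (p • 1) U L (q • 1)).det * p ^ Fintype.card n
      = p ^ Fintype.card m * ((p * q) • (1 : Matrix n n R) - L * U).det := by
  have key : Matrix.fromBlocks (p • (1 : Matrix m m R)) U L (q • (1 : Matrix n n R))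
        * Matrix.fromBlocks (1 : Matrix m m R) (-U) 0 (p • (1 : Matrix n n R))
      = Matrix.fromBlocks (p • 1) 0 L ((p * q) • (1 : Matrix n n R) - L * U) := by
    rw [Matrix.fromBlocks_multiply]
    congr 1
    · simp
    · simp
    · simp
    · simp [smul_smul, sub_eq_add_neg, add_comm]
  have hdet := congrArg Matrix.det key
  rw [Matrix.det_mul, Matrix.det_fromBlocks_zero₂₁, Matrix.det_fromBlocks_zero₁₂] at hdet
  simpa [Matrix.det_smul] using hdet

lemma rectId_mul_rectId (NV NC : ℕ) (h : NC < NV) :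
    (Matrix.of fun (i : Fin NC) (j : Fin NV) => if (i : ℕ) = (j : ℕ) then (1 : ℝ) else 0)
      * (Matrix.of fun (i : Fin NV) (j : Fin NC) => if (i : ℕ) = (j : ℕ) then (1 : ℝ) else 0)
      = 1 := by
  ext i j
  rw [Matrix.mul_apply, Finset.sum_eq_single (⟨i, i.2.trans h⟩ : Fin NV)]
  · simp [Matrix.one_apply, Fin.ext_iff]
  · intro k _ hk
    have : (i : ℕ) ≠ k := fun hik => hk (Fin.ext hik.symm)
    simp [this]
  · simp

/-- Schur analysis of the principal part of the one-compartment preconditioned matrix in the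
case `N_C < N_V`: its characteristic polynomial is
`(X − (4α+β)/16)^(N_V−N_C) · (X − λ₂)^(N_C) · (X − λ₃)^(N_C)`. -/
theorem stmt_7 (α β δ η : ℝ) (NV NC : ℕ) (hNV : 0 < NV) (hNC : 0 < NC) (h : NC < NV) :
    (Matrix.fromBlocks
        (((α + β / 4) / 4) • (1 : Matrix (Fin NV) (Fin NV) ℝ))
        ((η / 8) • Matrix.of fun (i : Fin NV) (j : Fin NC) =>
          if (i : ℕ) = (j : ℕ) then (1 : ℝ) else 0)
        ((η / 8) • Matrix.of fun (i : Fin NC) (j : Fin NV) =>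
          if (i : ℕ) = (j : ℕ) then (1 : ℝ) else 0)
        ((δ / 4) • (1 : Matrix (Fin NC) (Fin NC) ℝ))).charpoly
      = (X - C ((4 * α + β) / 16)) ^ (NV - NC)
        * (X - C ((1 / 32) * (4 * α + β + 4 * δ
            - Real.sqrt ((4 * α + β - 4 * δ) ^ 2 + 16 * η ^ 2)))) ^ NC
        * (X - C ((1 / 32) * (4 * α + β + 4 * δ
            + Real.sqrt ((4 * α + β - 4 * δ) ^ 2 + 16 * η ^ 2)))) ^ NC := by
  have hJ := rectId_mul_rectId NV NC h
  set K : Matrix (Fin NC) (Fin NV) ℝ :=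
    Matrix.of fun i j => if (i : ℕ) = (j : ℕ) then (1 : ℝ) else 0
  set J : Matrix (Fin NV) (Fin NC) ℝ :=
    Matrix.of fun i j => if (i : ℕ) = (j : ℕ) then (1 : ℝ) else 0
  have ha : (α + β / 4) / 4 = (4 * α + β) / 16 := by ring
  rw [ha]
  have hs : Real.sqrt ((4 * α + β - 4 * δ) ^ 2 + 16 * η ^ 2) ^ 2
      = (4 * α + β - 4 * δ) ^ 2 + 16 * η ^ 2 := Real.sq_sqrt (by positivity)
  set s := Real.sqrt ((4 * α + β - 4 * δ) ^ 2 + 16 * η ^ 2)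
  have hchar (k : ℕ) (c : ℝ) : (c • (1 : Matrix (Fin k) (Fin k) ℝ)).charmatrix
      = (X - C c) • (1 : Matrix (Fin k) (Fin k) ℝ[X]) := by
    ext1 i j
    by_cases hij : i = j
    · subst hij; simp [Matrix.charmatrix_apply_eq]
    · simp [hij]
  have hprod : (-((η / 8) • K).map C) * (-((η / 8) • J).map C)
      = (C ((η / 8) ^ 2) : ℝ[X]) • (1 : Matrix (Fin NC) (Fin NC) ℝ[X]) := by
    rw [Matrix.neg_mul, Matrix.mul_neg, neg_neg, ← Matrix.map_mul, Matrix.smul_mul,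
      Matrix.mul_smul, hJ, smul_smul, ← sq]
    ext1 i j
    by_cases hij : i = j
    · subst hij; simp
    · simp [hij]
  -- Vieta: the sum and the product of `λ₂`, `λ₃` match the coefficients of `p * q - (η/8)²`.
  have hquad : (X - C ((4 * α + β) / 16)) * (X - C (δ / 4)) - C ((η / 8) ^ 2)
      = (X - C ((1 / 32) * (4 * α + β + 4 * δ - s)))
        * (X - C ((1 / 32) * (4 * α + β + 4 * δ + s))) := by
    have h1 : (1 / 32) * (4 * α + β + 4 * δ - s) + (1 / 32) * (4 * α + β + 4 * δ + s)
        = (4 * α + β) / 16 + δ / 4 := by ring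
    have h2 : (1 / 32) * (4 * α + β + 4 * δ - s) * ((1 / 32) * (4 * α + β + 4 * δ + s))
        = (4 * α + β) / 16 * (δ / 4) - (η / 8) ^ 2 := by
      linear_combination (-1 / 1024) * hs
    have h1' := congrArg (C : ℝ → ℝ[X]) h1
    have h2' := congrArg (C : ℝ → ℝ[X]) h2
    rw [C_add, C_add] at h1'
    rw [C_sub, C_mul (a := (4 * α + β) / 16), C_mul] at h2'
    linear_combination X * h1' - h2'
  have hdet := det_scalar_blocks_mul (X - C ((4 * α + β) / 16)) (X - C (δ / 4))
    (-((η / 8) • J).map C) (-((η / 8) • K).map C)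
  rw [hprod, ← sub_smul, hquad, Matrix.det_smul, Matrix.det_one, mul_one, Fintype.card_fin,
    Fintype.card_fin] at hdet
  rw [Matrix.charpoly, Matrix.charmatrix_fromBlocks, hchar, hchar]
  apply mul_right_cancel₀ (pow_ne_zero NC (X_sub_C_ne_zero ((4 * α + β) / 16)))
  rw [hdet, ← Nat.sub_add_cancel h.le, pow_add, mul_pow, Nat.sub_add_cancel h.le]
  ring
end

section
/- Let N be a positive integer and, for each n ∈ {1, …, N}, let α_n, β_n, δ_n, η_n be real numbers and V_n ≤ C_n be positive integers. Consider the real square matrix A of size Σ_n V_n + Σ_n C_n, indexed by the disjoint union of the index sets of the V-blocks and the C-blocks, whose only nonzero entries are: ((α_n+β_n/4)/4) on the diagonal of the n-th V-block, (δ_n/4) on the diagonal of the n-th C-block, and (η_n/8)·I_{V_n,C_n} (respectively its transpose) coupling the n-th V-block with the n-th C-block. Then the characteristic polynomial of A equals the product over n = 1, …, N of (X − δ_n/4)^{C_n−V_n} · (X − λ₂ₙ)^{V_n} · (X − λ₃ₙ)^{V_n}, where λ₂ₙ := (1/32)·(4α_n+β_n+4δ_n − √((4α_n+β_n−4δ_n)²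 + 16η_n²)) and λ₃ₙ := (1/32)·(4α_n+β_n+4δ_n + √((4α_n+β_n−4δ_n)² + 16η_n²)). (Paper's spectral analysis of the principal part of the N-compartment preconditioned matrix, showing its eigenvalue set, and hence its condition number, is independent of the mesh refinement.) -/
/-!
The characteristic matrix is `[[a, B], [Bᵀ, d]]` with `a`, `d` diagonal and
constant on each compartment, and `B` a scaled rectangular identity on each compartment.
Multiplying on the left by `[[d_V, -B], [0, 1]]`, where `d_V` is the analogue of `d` on the
`V`-blocks, gives `[[d_V a - B Bᵀ, 0], [Bᵀ, d]]`, because `d_V B = B d`; and `B Bᵀ` is diagonal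
because `V n ≤ C n`. Taking determinants and cancelling `det d_V`, a product of monic polynomials,
leaves `∏ₙ dₙ ^ (Cₙ - Vₙ) * (aₙ dₙ - bₙ²) ^ Vₙ` (`det_coupled`). The quadratic `aₙ dₙ - bₙ²` has
the roots `λ₂ₙ` and `λ₃ₙ`.
-/

open Polynomial

/-- The rectangular block-diagonal matrix whose `n`-th block is `b n` times the generalized
identity of size `V n × W n`. -/
def couplingMatrix {R : Type*} [Zero R] {N : ℕ} (b : Fin N → R) (V W : Fin N → ℕ) :
    Matrix (Σ n : Fin N, Fin (V n)) (Σ n : Fin N, Fin (W n)) R :=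
  Matrix.of fun x y => if x.1 = y.1 ∧ (x.2 : ℕ) = (y.2 : ℕ) then b x.1 else 0

theorem sigma_fin_ext_iff {N : ℕ} {V : Fin N → ℕ} (x y : Σ n : Fin N, Fin (V n)) :
    x = y ↔ x.1 = y.1 ∧ (x.2 : ℕ) = (y.2 : ℕ) := by
  obtain ⟨n, i⟩ := x
  obtain ⟨m, j⟩ := y
  constructor
  · rintro h
    cases h
    exact ⟨rfl, rfl⟩
  · rintro ⟨h, h'⟩
    dsimp only at h h'
    subst h
    rw [Fin.ext h']

/-- The inequality `V n ≤ W n` is what makes every row of the coupling matrix nonzero. -/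
theorem couplingMatrix_mul_couplingMatrix {R : Type*} [CommRing R] {N : ℕ} (b : Fin N → R)
    (V W : Fin N → ℕ) (h : ∀ n, V n ≤ W n) :
    couplingMatrix b V W * couplingMatrix b W V = Matrix.diagonal fun x => b x.1 ^ 2 := by
  ext ⟨n, i⟩ ⟨m, j⟩
  rw [Matrix.mul_apply, Finset.sum_eq_single ⟨n, Fin.castLE (h n) i⟩]
  · simp only [couplingMatrix, Matrix.of_apply, Matrix.diagonal_apply, sigma_fin_ext_iff,
      Fin.val_castLE, and_self, if_true]
    split_ifs <;> ring
  · intro y _ hy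
    have hne : ¬ (n = y.1 ∧ (i : ℕ) = (y.2 : ℕ)) := fun hh =>
      hy ((sigma_fin_ext_iff _ _).2 ⟨hh.1.symm, hh.2.symm⟩)
    simp [couplingMatrix, hne]
  · simp

theorem diagonal_mul_couplingMatrix {R : Type*} [CommRing R] {N : ℕ} (d b : Fin N → R)
    (V W : Fin N → ℕ) :
    (Matrix.diagonal fun x : (Σ n : Fin N, Fin (V n)) => d x.1) * couplingMatrix b V W
      = couplingMatrix b V W * Matrix.diagonal fun x : (Σ n : Fin N, Fin (W n)) => d x.1 := by
  ext x y
  rw [Matrix.diagonal_mul, Matrix.mul_diagonal]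
  simp only [couplingMatrix, Matrix.of_apply]
  split_ifs with h
  · rw [h.1, mul_comm]
  · simp

theorem prod_sigma_fin {R : Type*} [CommRing R] {N : ℕ} (d : Fin N → R) (V : Fin N → ℕ) :
    ∏ x : (Σ n : Fin N, Fin (V n)), d x.1 = ∏ n, d n ^ V n := by
  simp [Fintype.prod_sigma]

/-- Schur-complement evaluation; cancelling by `d n ≠ 0` replaces inverting the block `d`, so the
entries may lie in a polynomial ring. -/
theorem det_coupled {R : Type*} [CommRing R] [IsDomain R] {N : ℕ} (a b d : Fin N → R)
    (V W : Fin N → ℕ) (h : ∀ n, V n ≤ W n) (hd : ∀ n, d n ≠ 0) :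
    (Matrix.fromBlocks (Matrix.diagonal fun x => a x.1) (couplingMatrix b V W)
      (couplingMatrix b W V) (Matrix.diagonal fun x => d x.1)).det
      = ∏ n, d n ^ (W n - V n) * (a n * d n - b n ^ 2) ^ V n := by
  have hmul : Matrix.fromBlocks (Matrix.diagonal fun x => d x.1) (-couplingMatrix b V W) 0 1 *
      Matrix.fromBlocks (Matrix.diagonal fun x => a x.1) (couplingMatrix b V W)
        (couplingMatrix b W V) (Matrix.diagonal fun x => d x.1)
      = Matrix.fromBlocks (Matrix.diagonal fun x => a x.1 * d x.1 - b x.1 ^ 2) 0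
        (couplingMatrix b W V) (Matrix.diagonal fun x => d x.1) := by
    rw [Matrix.fromBlocks_multiply]
    congr 1
    · rw [Matrix.neg_mul, couplingMatrix_mul_couplingMatrix b V W h, Matrix.diagonal_mul_diagonal,
        ← sub_eq_add_neg, Matrix.diagonal_sub]
      congr 1
      ext x
      ring
    · rw [diagonal_mul_couplingMatrix, Matrix.neg_mul, add_neg_cancel]
    · simp
    · simp
  have hdet := congrArg Matrix.det hmul
  rw [Matrix.det_mul, Matrix.det_fromBlocks_zero₂₁, Matrix.det_fromBlocks_zero₁₂,
    Matrix.det_one, mul_one] at hdet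
  simp only [Matrix.det_diagonal] at hdet
  rw [prod_sigma_fin d V, prod_sigma_fin d W,
    prod_sigma_fin (fun n => a n * d n - b n ^ 2) V] at hdet
  have hne : ∏ n, d n ^ V n ≠ 0 := Finset.prod_ne_zero_iff.2 fun n _ => pow_ne_zero _ (hd n)
  apply mul_left_cancel₀ hne
  rw [hdet, ← Finset.prod_mul_distrib, ← Finset.prod_mul_distrib]
  refine Finset.prod_congr rfl fun n _ => ?_
  rw [← mul_assoc, ← pow_add, Nat.add_sub_cancel' (h n), mul_comm]

/-- Factorization of the characteristic polynomial of the `2 × 2` matrix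
`[[(α + β/4)/4, η/8], [η/8, δ/4]]`. -/
theorem quadratic_factor (α β δ η : ℝ) :
    (X - C ((α + β / 4) / 4)) * (X - C (δ / 4)) - (-C (η / 8)) ^ 2
      = (X - C ((1 / 32) * (4 * α + β + 4 * δ
            - Real.sqrt ((4 * α + β - 4 * δ) ^ 2 + 16 * η ^ 2))))
        * (X - C ((1 / 32) * (4 * α + β + 4 * δ
            + Real.sqrt ((4 * α + β - 4 * δ) ^ 2 + 16 * η ^ 2)))) := by
  have hs := Real.sq_sqrt (show 0 ≤ (4 * α + β - 4 * δ) ^ 2 + 16 * η ^ 2 by positivity)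
  refine Polynomial.funext fun x => ?_
  simp only [eval_sub, eval_mul, eval_pow, eval_neg, eval_X, eval_C]
  linear_combination (1 / 1024) * hs

/-- Spectral analysis of the principal part of the `N`-compartment preconditioned matrix
(case `V_n ≤ C_n` for all `n`): its characteristic polynomial is
`∏ₙ (X − δₙ/4)^(Cₙ−Vₙ) · (X − λ₂ₙ)^(Vₙ) · (X − λ₃ₙ)^(Vₙ)`. -/
theorem stmt_8 (N : ℕ) (hN : 0 < N) (α β δ η : Fin N → ℝ) (V C' : Fin N → ℕ)
    (hV : ∀ n, 0 < V n) (hC : ∀ n, 0 < C' n) (hVC : ∀ n, V n ≤ C' n) :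
    (Matrix.of
        (fun x y : (Σ n : Fin N, Fin (V n)) ⊕ (Σ n : Fin N, Fin (C' n)) =>
          match x, y with
          | Sum.inl ⟨n, i⟩, Sum.inl ⟨m, j⟩ =>
              if n = m ∧ (i : ℕ) = (j : ℕ) then (α n + β n / 4) / 4 else (0 : ℝ)
          | Sum.inl ⟨n, i⟩, Sum.inr ⟨m, j⟩ =>
              if n = m ∧ (i : ℕ) = (j : ℕ) then η n / 8 else 0
          | Sum.inr ⟨n, i⟩, Sum.inl ⟨m, j⟩ =>
              if n = m ∧ (i : ℕ) = (j : ℕ) then η n / 8 else 0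
          | Sum.inr ⟨n, i⟩, Sum.inr ⟨m, j⟩ =>
              if n = m ∧ (i : ℕ) = (j : ℕ) then δ n / 4 else 0)).charpoly
      = ∏ n : Fin N,
          ((X - Polynomial.C (δ n / 4)) ^ (C' n - V n)
            * (X - Polynomial.C ((1 / 32) * (4 * α n + β n + 4 * δ n
                - Real.sqrt ((4 * α n + β n - 4 * δ n) ^ 2 + 16 * η n ^ 2)))) ^ V n
            * (X - Polynomial.C ((1 / 32) * (4 * α n + β n + 4 * δ n
                + Real.sqrt ((4 * α n + β n - 4 * δ n) ^ 2 + 16 * η n ^ 2)))) ^ V n) := by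
  have hmat : ∀ M : Matrix ((Σ n : Fin N, Fin (V n)) ⊕ (Σ n : Fin N, Fin (C' n))) _ ℝ,
      M = Matrix.fromBlocks (couplingMatrix (fun n => (α n + β n / 4) / 4) V V)
        (couplingMatrix (fun n => η n / 8) V C') (couplingMatrix (fun n => η n / 8) C' V)
        (couplingMatrix (fun n => δ n / 4) C' C') →
      M.charmatrix = Matrix.fromBlocks
        (Matrix.diagonal fun x => X - C ((α x.1 + β x.1 / 4) / 4))
        (couplingMatrix (fun n => -C (η n / 8)) V C')
        (couplingMatrix (fun n => -C (η n / 8)) C' V)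
        (Matrix.diagonal fun x => X - C (δ x.1 / 4)) := by
    rintro M rfl
    rw [Matrix.charmatrix_fromBlocks]
    congr 1
    · ext1 x y
      rw [Matrix.charmatrix_apply]
      simp only [Matrix.diagonal_apply, couplingMatrix, Matrix.of_apply, ← sigma_fin_ext_iff]
      split_ifs <;> simp
    · ext1 x y
      simp only [Matrix.neg_apply, Matrix.map_apply, couplingMatrix, Matrix.of_apply]
      split_ifs <;> simp
    · ext1 x y
      simp only [Matrix.neg_apply, Matrix.map_apply, couplingMatrix, Matrix.of_apply]
      split_ifs <;> simp
    · ext1 x y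
      rw [Matrix.charmatrix_apply]
      simp only [Matrix.diagonal_apply, couplingMatrix, Matrix.of_apply, ← sigma_fin_ext_iff]
      split_ifs <;> simp
  rw [Matrix.charpoly, hmat _ ?_,
    det_coupled (fun n => X - C ((α n + β n / 4) / 4)) (fun n => -C (η n / 8))
      (fun n => X - C (δ n / 4)) V C' hVC fun n => X_sub_C_ne_zero _]
  · refine Finset.prod_congr rfl fun n _ => ?_
    rw [quadratic_factor, mul_pow, mul_assoc]
  · ext (⟨n, i⟩ | ⟨n, i⟩) (⟨m, j⟩ | ⟨m, j⟩) <;> rfl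
end

section
/- Let σ₁, σ₂, R be positive reals and define q_V := max(σ₁,σ₂)^{-1/2}, q_C := min(σ₁,σ₂)^{1/2}, α := q_V⁴(σ₁+σ₂)², β := 4R²(q_V q_C)², δ := q_C⁴(σ₁⁻¹+σ₂⁻¹)², η := −2R q_C²(q_V q_C)(σ₁⁻¹+σ₂⁻¹). Then β·δ = η², and for all positive integers N_V, N_C the real (N_V+N_C)×(N_V+N_C) block matrix with upper-left block ((α+β/4)/4)·I_{N_V,N_V}, upper-right block (η/8)·I_{N_V,N_C}, lower-left block (η/8)·I_{N_C,N_V}, and lower-right block (δ/4)·I_{N_C,N_C} is symmetric positive definite. (Paper's claim that the principal part of the one-compartment preconditioned matrix, with the coefficients arising from the scaling matrix Q and the radii scalings, is symmetric positive definite.) -/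
/-!
Write `a`, `c`, `d` for the coefficients of the blocks. Since `β δ = η²`, we have
`a d - c² = α δ / 16 > 0`, so everything reduces to the fact that `a d > c²` and `a > 0` make
the block matrix positive definite. Choose `p`, `q` with `p q = c`, `p² < a`, `q² < d`. Then the
matrix is the sum of the positive diagonal matrix with entries `a - p²`, `d - q²` and of the Gram
matrix `W Wᵀ`, where `W` stacks `p` times and `q` times a rectangular identity
(`posDef_fromBlocks_rectangular_identity`).
-/

/-- A strict inequality `c² < a d` leaves room to split `c` as a product `p q`
with `p² < a` and `q² < d`. -/
lemma exists_mul_eq_sq_lt {a c d : ℝ} (ha : 0 < a) (h : c ^ 2 < a * d) :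
    ∃ p q : ℝ, p * q = c ∧ p ^ 2 < a ∧ q ^ 2 < d := by
  have hcd : c ^ 2 / a < d := by rw [div_lt_iff₀ ha]; linarith
  -- `q²` may be any number strictly between `c² / a` and `d`
  obtain ⟨t, ht1, ht2⟩ := exists_between hcd
  have ht : 0 < t := lt_of_le_of_lt (by positivity) ht1
  have hs : 0 < √t := Real.sqrt_pos.2 ht
  refine ⟨c / √t, √t, by field_simp, ?_, ?_⟩
  · rw [div_pow, Real.sq_sqrt ht.le, div_lt_iff₀ ht]
    rw [div_lt_iff₀ ha] at ht1
    linarith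
  · rwa [Real.sq_sqrt ht.le]

/-- The block matrix with blocks `a I`, `c I`, `c I`, `d I`, whose off-diagonal blocks are
rectangular identities, is positive definite as soon as the `2 × 2` matrix of its coefficients is. -/
lemma posDef_fromBlocks_rectangular_identity {a c d : ℝ} (ha : 0 < a) (h : c ^ 2 < a * d)
    (n m : ℕ) :
    (Matrix.fromBlocks
      (a • (1 : Matrix (Fin n) (Fin n) ℝ))
      (c • Matrix.of fun (i : Fin n) (j : Fin m) => if (i : ℕ) = (j : ℕ) then (1 : ℝ) else 0)
      (c • Matrix.of fun (i : Fin m) (j : Fin n) => if (i : ℕ) = (j : ℕ) then (1 : ℝ) else 0)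
      (d • (1 : Matrix (Fin m) (Fin m) ℝ))).PosDef := by
  obtain ⟨p, q, hpq, hp, hq⟩ := exists_mul_eq_sq_lt ha h
  -- `n + m` columns leave room for both rectangular identities
  let W : Matrix (Fin n ⊕ Fin m) (Fin (n + m)) ℝ := Matrix.of fun x k =>
    Sum.elim (fun i : Fin n => if Fin.castLE (Nat.le_add_right n m) i = k then p else 0)
      (fun j : Fin m => if Fin.castLE (Nat.le_add_left m n) j = k then q else 0) x
  have hD : (Matrix.diagonal (Sum.elim (fun _ : Fin n => a - p ^ 2)
      (fun _ : Fin m => d - q ^ 2))).PosDef := by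
    refine Matrix.PosDef.diagonal ?_
    rintro (i | j)
    · simpa using hp
    · simpa using hq
  have hW := Matrix.posSemidef_self_mul_conjTranspose W
  convert hD.add_posSemidef hW using 1
  have hsum (u v : Fin (n + m)) (x y : ℝ) :
      ∑ k, (if u = k then x else 0) * (if v = k then y else 0) =
        if (u : ℕ) = v then x * y else 0 := by
    by_cases huv : u = v
    · simp [huv]
    · have : (u : ℕ) ≠ v := fun e => huv (Fin.ext e)
      simp [this, huv]
  have hWW (x y) : (W * W.conjTranspose) x y = ∑ k, W x k * W y k := by
    simp [Matrix.mul_apply]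
  ext (i | i) (j | j)
  all_goals
    rw [Matrix.add_apply, hWW]
    simp only [W, Matrix.of_apply, Sum.elim_inl, Sum.elim_inr, hsum]
    simp only [Matrix.fromBlocks_apply₁₁, Matrix.fromBlocks_apply₁₂, Matrix.fromBlocks_apply₂₁,
      Matrix.fromBlocks_apply₂₂, Matrix.diagonal_apply, Matrix.one_apply, Matrix.smul_apply,
      Matrix.of_apply, Fin.val_castLE, Sum.inl.injEq, Sum.inr.injEq, reduceCtorEq, if_false,
      smul_eq_mul, Sum.elim_inl, Sum.elim_inr, Fin.ext_iff, ← hpq]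
    split_ifs <;> ring

/-- With the high-contrast scalings `q_V = max(σ₁,σ₂)^{-1/2}`, `q_C = min(σ₁,σ₂)^{1/2}` and the
coefficients `α, β, δ, η` of the principal part of the one-compartment preconditioned matrix,
one has `β·δ = η²`, and for all positive `N_V`, `N_C` the corresponding block matrix is
symmetric positive definite. -/
theorem stmt_9 (σ₁ σ₂ R : ℝ) (hσ₁ : 0 < σ₁) (hσ₂ : 0 < σ₂) (hR : 0 < R)
    (qV qC α β δ η : ℝ)
    (hqV : qV = (Real.sqrt (max σ₁ σ₂))⁻¹)
    (hqC : qC = Real.sqrt (min σ₁ σ₂))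
    (hα : α = qV ^ 4 * (σ₁ + σ₂) ^ 2)
    (hβ : β = 4 * R ^ 2 * (qV * qC) ^ 2)
    (hδ : δ = qC ^ 4 * (σ₁⁻¹ + σ₂⁻¹) ^ 2)
    (hη : η = -2 * R * qC ^ 2 * (qV * qC) * (σ₁⁻¹ + σ₂⁻¹)) :
    β * δ = η ^ 2 ∧
    ∀ (NV NC : ℕ), 0 < NV → 0 < NC →
      (Matrix.fromBlocks
          (((α + β / 4) / 4) • (1 : Matrix (Fin NV) (Fin NV) ℝ))
          ((η / 8) • Matrix.of fun (i : Fin NV) (j : Fin NC) =>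
            if (i : ℕ) = (j : ℕ) then (1 : ℝ) else 0)
          ((η / 8) • Matrix.of fun (i : Fin NC) (j : Fin NV) =>
            if (i : ℕ) = (j : ℕ) then (1 : ℝ) else 0)
          ((δ / 4) • (1 : Matrix (Fin NC) (Fin NC) ℝ))).PosDef := by
  have hβδ : β * δ = η ^ 2 := by rw [hβ, hδ, hη]; ring
  have hqV0 : 0 < qV := by
    rw [hqV]; exact inv_pos.2 (Real.sqrt_pos.2 (lt_max_of_lt_left hσ₁))
  have hqC0 : 0 < qC := by
    rw [hqC]; exact Real.sqrt_pos.2 (lt_min hσ₁ hσ₂)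
  have hα0 : 0 < α := by rw [hα]; positivity
  have hβ0 : 0 < β := by rw [hβ]; positivity
  have hδ0 : 0 < δ := by rw [hδ]; positivity
  refine ⟨hβδ, fun NV NC _ _ => posDef_fromBlocks_rectangular_identity (by positivity) ?_ NV NC⟩
  have hαδ : 0 < α * δ := mul_pos hα0 hδ0
  nlinarith
end

section
/- Fix R > 0 and for t ≥ 1 set α(t) := (1+t⁻¹)², δ(t) := (1+t⁻¹)², β(t) := 4R²·t⁻¹, η(t) := −2R·t^{-1/2}(1+t⁻¹), and let λ₂(t) := (1/32)·(4α+β+4δ − √((4α+β−4δ)² + 16η²)) and λ₃(t) := (1/32)·(4α+β+4δ + √((4α+β−4δ)² + 16η²)) be the two coupled eigenvalues of the principal part of the preconditioned one-compartment matrix. Then there exist constants c > 0 and t₀ ≥ 1 such that for all t ≥ t₀ one has λ₂(t) > 0 and 0 ≤ λ₃(t)/λ₂(t) − 1 ≤ c·t^{-1/2}. (Paper's claim that the condition number of the principal part of the preconditioned matrix tends to 1 in the high-contrast regime at rate O(CR^{-1/2}).) -/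
/-!
Put `s = t^{-1/2}`, so that `t⁻¹ = s²` and `0 < s ≤ 1`. With `S = 4α + β + 4δ` and `q` the square
root of the discriminant, `λ₃/λ₂ - 1 = 2q/(S - q)`. Since `α = δ`, the discriminant is
`16R⁴s⁴ + 64R²s²(1+s²)²`, which is at most `(K s)²` for `K = 4R² + 16R`, while `S ≥ 8`. As soon as
`K s ≤ 4`, that is `t ≥ K²/16`, the denominator is at least `4` and the ratio is at most `(K/2) s`.
-/

/-- High-contrast behaviour of the condition number of the principal part of the
preconditioned one-compartment matrix: with the exact coefficients for contrast ratio
`CR = t`, the two coupled eigenvalues `λ₂(t) ≤ λ₃(t)` satisfy, for `t` large enough,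
`λ₂(t) > 0` and `0 ≤ λ₃(t)/λ₂(t) − 1 ≤ c·t^{-1/2}`, i.e. `cond − 1 = O(CR^{-1/2})`. -/
theorem stmt_11 (R : ℝ) (hR : 0 < R) (α β δ η lam₂ lam₃ : ℝ → ℝ)
    (hα : ∀ t, α t = (1 + t⁻¹) ^ 2)
    (hδ : ∀ t, δ t = (1 + t⁻¹) ^ 2)
    (hβ : ∀ t, β t = 4 * R ^ 2 * t⁻¹)
    (hη : ∀ t, η t = -2 * R * t ^ (-(1 / 2 : ℝ)) * (1 + t⁻¹))
    (hl₂ : ∀ t, lam₂ t = (1 / 32) * (4 * α t + β t + 4 * δ t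
        - Real.sqrt ((4 * α t + β t - 4 * δ t) ^ 2 + 16 * (η t) ^ 2)))
    (hl₃ : ∀ t, lam₃ t = (1 / 32) * (4 * α t + β t + 4 * δ t
        + Real.sqrt ((4 * α t + β t - 4 * δ t) ^ 2 + 16 * (η t) ^ 2))) :
    ∃ c > (0 : ℝ), ∃ t₀ ≥ (1 : ℝ), ∀ t ≥ t₀,
      0 < lam₂ t ∧ 0 ≤ lam₃ t / lam₂ t - 1 ∧ lam₃ t / lam₂ t - 1 ≤ c * t ^ (-(1 / 2 : ℝ)) := by
  obtain ⟨K, hK⟩ : ∃ K : ℝ, K = 4 * R ^ 2 + 16 * R := ⟨_, rfl⟩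
  have hKpos : 0 < K := by rw [hK]; positivity
  refine ⟨K / 2, by positivity, 1 + K ^ 2 / 16, by nlinarith [sq_nonneg K], fun t ht => ?_⟩
  have ht1 : 1 ≤ t := by nlinarith [sq_nonneg K]
  have ht0 : 0 < t := by linarith
  obtain ⟨s, hs⟩ : ∃ s : ℝ, s = t ^ (-(1 / 2 : ℝ)) := ⟨_, rfl⟩
  have hs0 : 0 < s := by rw [hs]; positivity
  have hs2 : t⁻¹ = s ^ 2 := by
    rw [hs, ← Real.rpow_natCast, ← Real.rpow_mul ht0.le, ← Real.rpow_neg_one]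
    norm_num
  have hst : s ^ 2 * t = 1 := by rw [← hs2]; field_simp
  have hs1 : s ^ 2 ≤ 1 := by rw [← hs2]; exact inv_le_one_of_one_le₀ ht1
  have hKs : K * s ≤ 4 := by
    have h : s ^ 2 * (1 + K ^ 2 / 16) ≤ s ^ 2 * t := mul_le_mul_of_nonneg_left ht (sq_nonneg s)
    refine abs_le_of_sq_le_sq' (a := K * s) (b := 4) ?_ (by norm_num) |>.2
    nlinarith [sq_nonneg s]
  rw [hl₃, hl₂, hα, hδ, hβ, hη, ← hs, hs2]
  set q := Real.sqrt ((4 * (1 + s ^ 2) ^ 2 + 4 * R ^ 2 * s ^ 2 - 4 * (1 + s ^ 2) ^ 2) ^ 2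
    + 16 * (-2 * R * s * (1 + s ^ 2)) ^ 2) with hq
  have hq0 : 0 ≤ q := Real.sqrt_nonneg _
  have hqK : q ≤ K * s := by
    rw [hq]
    apply Real.sqrt_le_iff.2 ⟨by positivity, ?_⟩
    have h1 : R ^ 4 * s ^ 2 * s ^ 2 ≤ R ^ 4 * s ^ 2 * 1 :=
      mul_le_mul_of_nonneg_left hs1 (by positivity)
    have h2 : R ^ 2 * s ^ 2 * (1 + s ^ 2) ^ 2 ≤ R ^ 2 * s ^ 2 * 4 :=
      mul_le_mul_of_nonneg_left (by nlinarith [sq_nonneg s]) (by positivity)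
    have h3 : 0 ≤ R ^ 3 * s ^ 2 := by positivity
    rw [hK]
    nlinarith
  obtain ⟨S, hS⟩ : ∃ S : ℝ,
      S = 4 * (1 + s ^ 2) ^ 2 + 4 * R ^ 2 * s ^ 2 + 4 * (1 + s ^ 2) ^ 2 := ⟨_, rfl⟩
  have hS8 : 8 ≤ S := by
    have : 0 ≤ R ^ 2 * s ^ 2 := by positivity
    nlinarith [sq_nonneg s, sq_nonneg (s ^ 2)]
  rw [← hS]
  have hden : 4 ≤ S - q := by linarith
  have hne : S - q ≠ 0 := by linarith
  have hratio : 1 / 32 * (S + q) / (1 / 32 * (S - q)) - 1 = 2 * q / (S - q) := by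
    field_simp
    ring
  rw [hratio]
  refine ⟨by linarith, div_nonneg (by linarith) (by linarith), ?_⟩
  rw [div_le_iff₀ (by linarith)]
  nlinarith [mul_pos hKpos hs0]
end

section
/- Let n be a positive integer, let Z be a real symmetric n×n matrix whose kernel (as a linear map ℝⁿ → ℝⁿ, x ↦ Z x) is one-dimensional and spanned by a nonzero vector u, and let ζ ∈ ℝⁿ satisfy ζᵀu ≠ 0. Then: (i) the matrix Ẑ := Z + ζζᵀ is invertible; (ii) for every b in the range of x ↦ Z x, the unique solution x of Ẑ x = b satisfies Z x = b and ζᵀ x = 0. (This is the paper's deflation result: the deflated symmetric-formulation system (Z + ζζᵀ)x = b has a unique solution, this solution also solves the original singular system Zx = b, and it satisfies the mean-value-free condition ζᵀx = 0.) -/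
/-!
By symmetry of `Z`, the range of `Z` is orthogonal to `u`. Pairing `Zx + (ζᵀx)ζ = b` with `u`, for
`b` in the range of `Z`, therefore gives `(ζᵀx)(ζᵀu) = 0`, so `ζᵀx = 0` and `Zx = b`. The case
`b = 0` shows that `Z + ζζᵀ` is injective: `x` is then a multiple of `u` with `ζᵀx = 0`, hence zero.
-/

open Matrix

/-- Deflation of the singular symmetric system: if `Z` is real symmetric with
one-dimensional kernel spanned by `u ≠ 0` and `ζᵀu ≠ 0`, then `Ẑ = Z + ζζᵀ` is
invertible, and for every `b` in the range of `x ↦ Zx`, any solution `x` of `Ẑx = b`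
also satisfies `Zx = b` and the mean-value-free condition `ζᵀx = 0`. -/
theorem stmt_12 {n : ℕ} (hn : 0 < n) (Z : Matrix (Fin n) (Fin n) ℝ)
    (hZsymm : Zᵀ = Z) (u : Fin n → ℝ) (hu : u ≠ 0)
    (hker : LinearMap.ker Z.mulVecLin = Submodule.span ℝ {u})
    (ζ : Fin n → ℝ) (hζ : ζ ⬝ᵥ u ≠ 0) :
    IsUnit (Z + vecMulVec ζ ζ) ∧
      ∀ b ∈ LinearMap.range Z.mulVecLin,
        ∀ x : Fin n → ℝ, (Z + vecMulVec ζ ζ).mulVec x = b →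
          Z.mulVec x = b ∧ ζ ⬝ᵥ x = 0 := by
  have hZu : Z *ᵥ u = 0 := by
    have h : u ∈ LinearMap.ker Z.mulVecLin := hker ▸ Submodule.mem_span_singleton_self u
    simpa using h
  have horth (y : Fin n → ℝ) : u ⬝ᵥ (Z *ᵥ y) = 0 := by
    rw [dotProduct_mulVec, ← mulVec_transpose, hZsymm, hZu, zero_dotProduct]
  have hdef (x : Fin n → ℝ) :
      (Z + vecMulVec ζ ζ) *ᵥ x = Z *ᵥ x + (ζ ⬝ᵥ x) • ζ := by
    rw [add_mulVec, vecMulVec_mulVec, op_smul_eq_smul]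
  -- Pairing `Ẑx = b` with `u` kills `Zx` and `b`, leaving `(ζᵀx)(ζᵀu) = 0`.
  have key : ∀ b ∈ LinearMap.range Z.mulVecLin, ∀ x : Fin n → ℝ,
      (Z + vecMulVec ζ ζ) *ᵥ x = b → Z *ᵥ x = b ∧ ζ ⬝ᵥ x = 0 := by
    rintro _ ⟨y, rfl⟩ x hx
    rw [hdef, mulVecLin_apply] at hx
    have h := congrArg (u ⬝ᵥ ·) hx
    simp only [dotProduct_add, horth, dotProduct_smul, smul_eq_mul, zero_add,
      dotProduct_comm u ζ] at h
    have h0 : ζ ⬝ᵥ x = 0 := (mul_eq_zero.mp h).resolve_right hζ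
    exact ⟨by simpa [h0] using hx, h0⟩
  refine ⟨mulVec_injective_iff_isUnit.mp ?_, key⟩
  refine (injective_iff_map_eq_zero (Z + vecMulVec ζ ζ).mulVecLin).mpr fun x hx => ?_
  obtain ⟨hZx, hζx⟩ := key 0 (Submodule.zero_mem _) x hx
  have hmem : x ∈ Submodule.span ℝ {u} := hker ▸ (by simpa using hZx)
  obtain ⟨c, rfl⟩ := Submodule.mem_span_singleton.mp hmem
  rw [dotProduct_smul, smul_eq_mul] at hζx
  rw [(mul_eq_zero.mp hζx).resolve_right hζ, zero_smul]
end
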